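/- Every De Morgan clone C with DMA ⊊ C contains at least one of the functions mnh²₁, mnh²₂, mhnp³; moreover, the three clones ⟨DMA, mnh²₁⟩, ⟨DMA, mnh²₂⟩, ⟨DMA, mhnp³⟩ are pairwise incomparable by inclusion. Consequently, DMA has exactly three covers in the lattice of clones on DM4, namely ⟨DMA, mnh²₁⟩, ⟨DMA, mnh²₂⟩ and ⟨DMA, mhnp³⟩. -/

import Mathlib

set_option autoImplicit false

/-- The four truth values of the Belnap–Dunn logic. -/
inductive DM4 : Type
  | t
  | f
  | n
  | b
deriving DecidableEq

namespace DM4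

/-- De Morgan negation. -/
def neg : DM4 → DM4
  | t => f
  | f => t
  | n => n
  | b => b

/-- Conflation. -/
def conf : DM4 → DM4
  | t => t
  | f => f
  | n => b
  | b => n

/-- Meet in the truth order. -/
def meet : DM4 → DM4 → DM4
  | f, _ => f
  | _, f => f
  | t, y => y
  | x, t => x
  | n, n => n
  | b, b => b
  | n, b => f
  | b, n => f

/-- Join in the truth order. -/
def join : DM4 → DM4 → DM4
  | t, _ => t
  | _, t => t
  | f, y => y
  | x, f => x
  | n, n => n
  | b, b => b
  | n, b => t
  | b, n => t

/-- Meet in the information order (⊗). -/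
def imeet : DM4 → DM4 → DM4
  | n, _ => n
  | _, n => n
  | b, y => y
  | x, b => x
  | t, t => t
  | f, f => f
  | t, f => n
  | f, t => n

/-- Join in the information order (⊕). -/
def ijoin : DM4 → DM4 → DM4
  | b, _ => b
  | _, b => b
  | n, y => y
  | x, n => x
  | t, t => t
  | f, f => f
  | t, f => b
  | f, t => b

/-- The truth order: least element `f`, greatest element `t`, with `n`, `b` incomparable. -/
def tle (x y : DM4) : Prop := x = y ∨ x = f ∨ y = t

/-- The information order: least element `n`, greatest element `b`, with `t`, `f` incomparable. -/
def ile (x y : DM4) : Prop := x = y ∨ x = n ∨ y = b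

/-- □: maps t to t and everything else to f. -/
def box : DM4 → DM4
  | t => t
  | _ => f

/-- ◇: maps f to f and everything else to t. -/
def diamond : DM4 → DM4
  | f => f
  | _ => t

/-- Δ: maps t, b to t and n, f to f. -/
def delta : DM4 → DM4
  | t => t
  | b => t
  | _ => f

/-- ∇: maps t, n to t and b, f to f. -/
def nabla : DM4 → DM4
  | t => t
  | n => t
  | _ => f

/-- id_{b↦n}: maps b to n and fixes t, f, n. -/
def idbn : DM4 → DM4
  | b => n
  | x => x

/-- id_{n↦b}: maps n to b and fixes t, f, b. -/
def idnb : DM4 → DM4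
  | n => b
  | x => x

/-- id_{n↦t}: maps n to t and fixes t, f, b. -/
def idnt : DM4 → DM4
  | n => t
  | x => x

/-- id_{b↦t}: maps b to t and fixes t, f, n. -/
def idbt : DM4 → DM4
  | b => t
  | x => x

/-- t_{n↦n}: maps n to n and everything else to t. -/
def tnn : DM4 → DM4
  | n => n
  | _ => t

/-- t_{b↦b}: maps b to b and everything else to t. -/
def tbb : DM4 → DM4
  | b => b
  | _ => t

/-- The binary function pbp²₁. -/
def pbp1 : DM4 → DM4 → DM4
  | t, t => t | t, f => f | t, n => f | t, b => b
  | f, t => t | f, f => f | f, n => f | f, b => b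
  | n, t => t | n, f => f | n, n => n | n, b => b
  | b, t => b | b, f => f | b, n => f | b, b => b

/-- The binary function pbp²₂. -/
def pbp2 : DM4 → DM4 → DM4
  | t, t => t | t, f => f | t, n => n | t, b => f
  | f, t => t | f, f => f | f, n => n | f, b => f
  | n, t => n | n, f => f | n, n => n | n, b => f
  | b, t => t | b, f => f | b, n => n | b, b => b

/-- The binary function mnh²₁. -/
def mnh1 : DM4 → DM4 → DM4
  | t, t => f | t, f => f | t, n => n | t, b => b
  | f, t => f | f, f => f | f, n => n | f, b => b
  | n, t => f | n, f => f | n, n => n | n, b => f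
  | b, t => f | b, f => f | b, n => n | b, b => b

/-- The binary function mnh²₂. -/
def mnh2 : DM4 → DM4 → DM4
  | t, t => f | t, f => f | t, n => n | t, b => b
  | f, t => f | f, f => f | f, n => n | f, b => b
  | n, t => f | n, f => f | n, n => n | n, b => b
  | b, t => f | b, f => f | b, n => f | b, b => b

/-- The binary function mhnp². -/
def mhnp2 : DM4 → DM4 → DM4
  | t, _ => t
  | f, _ => t
  | n, b => f
  | n, _ => n
  | b, n => f
  | b, _ => b

/-- The binary function mnp²₁. -/
def mnp1 : DM4 → DM4 → DM4
  | t, b => b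
  | t, _ => t
  | f, b => b
  | f, _ => t
  | n, b => f
  | n, _ => n
  | b, n => f
  | b, _ => b

/-- The binary function mnp²₂. -/
def mnp2 : DM4 → DM4 → DM4
  | t, _ => t
  | f, _ => t
  | n, _ => n
  | b, n => f
  | b, _ => b

/-- The binary function mnp²₃. -/
def mnp3 : DM4 → DM4 → DM4
  | t, n => n
  | t, _ => t
  | f, n => n
  | f, _ => t
  | n, b => f
  | n, _ => n
  | b, n => f
  | b, _ => b

/-- The binary function mnp²₄. -/
def mnp4 : DM4 → DM4 → DM4
  | t, _ => t
  | f, _ => t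
  | n, b => f
  | n, _ => n
  | b, _ => b

/-- The ternary function mhnp³. -/
def mhnp3 : DM4 → DM4 → DM4 → DM4
  | _, t, _ => f
  | _, f, _ => f
  | t, n, _ => n
  | f, n, _ => f
  | b, n, _ => f
  | n, n, b => f
  | n, n, _ => n
  | t, b, _ => b
  | f, b, _ => f
  | n, b, _ => f
  | b, b, n => f
  | b, b, _ => b

/-- The set of designated values. -/
def Des : Set DM4 := {t, b}

/-- Designatedness as a Boolean predicate. -/
def des : DM4 → Bool
  | t => true
  | b => true
  | _ => false

/-- The protoimplication →_{t-max}. -/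
def tmax (x y : DM4) : DM4 :=
  match des x, des y with
  | true, false => n
  | _, _ => t

/-- The protoimplication →_{i-max}. -/
def imax (x y : DM4) : DM4 :=
  match des x, des y with
  | true, false => f
  | _, _ => b

/-- The protoimplication ↔_{t-min}. -/
def tmin (x y : DM4) : DM4 := if x = y then b else f

/-- The protoimplication ↔_{i-min}. -/
def imin (x y : DM4) : DM4 := if x = y then t else n

/-- A binary operation is a protoimplication if it satisfies Reflexivity and Modus Ponens
with respect to the designated set {t, b}. -/
def IsProtoimplication (r : DM4 → DM4 → DM4) : Prop :=
  (∀ a : DM4, r a a ∈ Des) ∧ ∀ a c : DM4, a ∈ Des → r a c ∈ Des → c ∈ Des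

/-- `DMFun k` is the type of De Morgan functions of arity `k + 1` (arities are positive). -/
abbrev DMFun (k : ℕ) : Type := (Fin (k + 1) → DM4) → DM4

/-- Membership in the clone generated by the family of operations `S`
(`S k` is the set of generators of arity `k + 1`). -/
inductive InClone (S : ∀ k : ℕ, Set (DMFun k)) : ∀ k : ℕ, DMFun k → Prop
  | base {k : ℕ} {g : DMFun k} : g ∈ S k → InClone S k g
  | proj {k : ℕ} (i : Fin (k + 1)) : InClone S k (fun x => x i)
  | comp {k m : ℕ} {g : DMFun m} {h : Fin (m + 1) → DMFun k} :
      InClone S m g → (∀ i, InClone S k (h i)) →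
      InClone S k (fun x => g (fun i => h i x))

/-- A family of sets of De Morgan functions is a clone if it contains all projections
and is closed under composition. -/
structure IsClone (C : ∀ k : ℕ, Set (DMFun k)) : Prop where
  proj : ∀ (k : ℕ) (i : Fin (k + 1)), (fun x => x i) ∈ C k
  comp : ∀ (k m : ℕ) (g : DMFun m) (h : Fin (m + 1) → DMFun k),
      g ∈ C m → (∀ i, h i ∈ C k) → (fun x => g (fun i => h i x)) ∈ C k

/-- The generating family consisting of a single unary operation. -/
def op1 (g : DM4 → DM4) : ∀ k : ℕ, Set (DMFun k)
  | 0 => {fun x => g (x 0)}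
  | _ + 1 => ∅

/-- The generating family consisting of a single binary operation. -/
def op2 (g : DM4 → DM4 → DM4) : ∀ k : ℕ, Set (DMFun k)
  | 1 => {fun x => g (x 0) (x 1)}
  | _ => ∅

/-- The generating family consisting of a single ternary operation. -/
def op3 (g : DM4 → DM4 → DM4 → DM4) : ∀ k : ℕ, Set (DMFun k)
  | 2 => {fun x => g (x 0) (x 1) (x 2)}
  | _ => ∅

/-- Union of two families of operations. -/
def funion (S T : ∀ k : ℕ, Set (DMFun k)) : ∀ k : ℕ, Set (DMFun k) := fun k => S k ∪ T k

infixr:65 " ⊹ " => funion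

/-- The generators of DLat: ∧, ∨, t, f (constants as unary constant functions). -/
def DLatGen : ∀ k : ℕ, Set (DMFun k) :=
  op2 meet ⊹ op2 join ⊹ op1 (fun _ => t) ⊹ op1 (fun _ => f)

/-- The generators of DMA: ∧, ∨, t, f, −. -/
def DMAGen : ∀ k : ℕ, Set (DMFun k) := DLatGen ⊹ op1 neg

/-- The generators of BiLat: ∧, ∨, t, f, ⊗, ⊕, n, b. -/
def BiLatGen : ∀ k : ℕ, Set (DMFun k) :=
  DLatGen ⊹ op2 imeet ⊹ op2 ijoin ⊹ op1 (fun _ => n) ⊹ op1 (fun _ => b)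

/-- A De Morgan function is harmonious if it commutes with conflation. -/
def Harmonious {k : ℕ} (g : DMFun k) : Prop :=
  ∀ x : Fin (k + 1) → DM4, g (fun i => conf (x i)) = conf (g x)

/-- A De Morgan function is positive if it is monotone in the componentwise truth order. -/
def Positive {k : ℕ} (g : DMFun k) : Prop :=
  ∀ x y : Fin (k + 1) → DM4, (∀ i, tle (x i) (y i)) → tle (g x) (g y)

/-- A De Morgan function is persistent if it is monotone in the componentwise
information order. -/
def Persistent {k : ℕ} (g : DMFun k) : Prop :=
  ∀ x y : Fin (k + 1) → DM4, (∀ i, ile (x i) (y i)) → ile (g x) (g y)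

/-- A De Morgan function preserves a subset X of DM4 if it maps tuples from X into X. -/
def Preserves {k : ℕ} (g : DMFun k) (X : Set DM4) : Prop :=
  ∀ x : Fin (k + 1) → DM4, (∀ i, x i ∈ X) → g x ∈ X

def B2 : Set DM4 := {t, f}
def K3 : Set DM4 := {t, n, f}
def P3 : Set DM4 := {t, b, f}

/-- A unary operation as a De Morgan function. -/
def toF1 (g : DM4 → DM4) : DMFun 0 := fun x => g (x 0)

/-- A binary operation as a De Morgan function. -/
def toF2 (g : DM4 → DM4 → DM4) : DMFun 1 := fun x => g (x 0) (x 1)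

/-- A ternary operation as a De Morgan function. -/
def toF3 (g : DM4 → DM4 → DM4 → DM4) : DMFun 2 := fun x => g (x 0) (x 1) (x 2)

/-- The clone generated by a family of operations, as a family of sets. -/
def CloneOf (S : ∀ k : ℕ, Set (DMFun k)) : ∀ k : ℕ, Set (DMFun k) :=
  fun k => {g | InClone S k g}

/-- Inclusion of families of operations. -/
def CloneLE (C D : ∀ k : ℕ, Set (DMFun k)) : Prop := ∀ k : ℕ, C k ⊆ D k

/-!
An element `x` of `DM4` is determined by the two bits `b ≤ x` and `b ≤ neg x`, or equivalently by
`b ≤ x` and `b ≤ conf x`, and `b` is join-prime in the truth order. So a disjunctive normal form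
realizes the first bit of any persistent function, and harmony takes care of the second: `DMA`
consists of the harmonious persistent functions.

A clone strictly above `DMA` therefore contains a function `g` violating one of the two properties.
Substituting `DMA` terms for the arguments of `g` moves the violation to a fixed pair of tuples,
`(n, b)` and `(b, n)` for harmony, `(t, b, n)` and `(b, b, n)` for persistence. At these tuples a
single De Morgan term turns it into `mnh1`, `mnh2` or `mhnp3`, whatever its values elsewhere.

These three functions are separated from each other by the clones of functions preserving
`ile x (conf y)`, `ile (conf x) y` and `conf x = y` respectively.
-/

instance : Fintype DM4 := ⟨{t, f, n, b}, fun x => by cases x <;> decide⟩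

instance : DecidableRel ile := fun x y => inferInstanceAs (Decidable (x = y ∨ x = n ∨ y = b))

instance : LE DM4 := ⟨tle⟩

instance : DecidableLE DM4 := fun x y => inferInstanceAs (Decidable (x = y ∨ x = f ∨ y = t))

instance : Lattice DM4 where
  inf := meet
  sup := join
  le_refl := by decide
  le_trans := by decide
  le_antisymm := by decide
  inf_le_left := by decide
  inf_le_right := by decide
  le_inf := by decide
  le_sup_left := by decide
  le_sup_right := by decide
  sup_le := by decide

instance : BoundedOrder DM4 where
  top := t
  bot := f
  le_top := by decide
  bot_le := by decide

theorem supPrime_b : SupPrime b := by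
  refine ⟨fun h => absurd (h (b := f)) (by decide), fun {x y} => ?_⟩
  revert x y
  decide

theorem ile_iff {x y : DM4} :
    ile x y ↔ (b ≤ x → b ≤ y) ∧ (b ≤ neg x → b ≤ neg y) := by
  revert x y
  decide

theorem eq_iff_b_le {x y : DM4} :
    x = y ↔ (b ≤ x ↔ b ≤ y) ∧ (b ≤ conf x ↔ b ≤ conf y) := by
  revert x y
  decide

theorem conf_eq_iff {x y : DM4} :
    conf x = y ↔ (b ≤ x ↔ n ≤ y) ∧ (b ≤ neg x ↔ n ≤ neg y) := by
  revert x y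
  decide

section Clones

variable {C S T : ∀ k : ℕ, Set (DMFun k)}

theorem isClone_cloneOf (S : ∀ k : ℕ, Set (DMFun k)) : IsClone (CloneOf S) where
  proj _ i := .proj i
  comp _ _ _ _ hg hh := .comp hg hh

theorem IsClone.cloneOf_le_iff (hC : IsClone C) : CloneOf S ≤ C ↔ S ≤ C := by
  refine ⟨fun h k g hg => h k (.base hg), fun h k g hg => ?_⟩
  induction hg with
  | base hg => exact h _ hg
  | proj i => exact hC.proj _ i
  | comp _ _ ihg ihh => exact hC.comp _ _ _ _ ihg ihh

theorem funion_le_iff : S ⊹ T ≤ C ↔ S ≤ C ∧ T ≤ C :=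
  sup_le_iff

theorem op1_le_iff {m : DM4 → DM4} : op1 m ≤ C ↔ toF1 m ∈ C 0 := by
  refine ⟨fun h => h 0 rfl, fun h k g hg => ?_⟩
  match k with
  | 0 => exact Set.mem_singleton_iff.1 hg ▸ h
  | _ + 1 => exact hg.elim

theorem op2_le_iff {m : DM4 → DM4 → DM4} : op2 m ≤ C ↔ toF2 m ∈ C 1 := by
  refine ⟨fun h => h 1 rfl, fun h k g hg => ?_⟩
  match k with
  | 0 => exact hg.elim
  | 1 => exact Set.mem_singleton_iff.1 hg ▸ h
  | _ + 2 => exact hg.elim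

theorem op3_le_iff {m : DM4 → DM4 → DM4 → DM4} : op3 m ≤ C ↔ toF3 m ∈ C 2 := by
  refine ⟨fun h => h 2 rfl, fun h k g hg => ?_⟩
  match k with
  | 0 => exact hg.elim
  | 1 => exact hg.elim
  | 2 => exact Set.mem_singleton_iff.1 hg ▸ h
  | _ + 3 => exact hg.elim

theorem DMAGen_le_iff :
    DMAGen ≤ C ↔ (toF2 meet ∈ C 1 ∧ toF2 join ∈ C 1 ∧ toF1 (fun _ => t) ∈ C 0 ∧
      toF1 (fun _ => f) ∈ C 0) ∧ toF1 neg ∈ C 0 := by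
  simp only [DMAGen, DLatGen, funion_le_iff, op1_le_iff, op2_le_iff]

/-- A family of De Morgan functions is a clone containing `DMA`. -/
structure ExtendsDMA (C : ∀ k : ℕ, Set (DMFun k)) : Prop extends IsClone C where
  dma_le : CloneOf DMAGen ≤ C

theorem extendsDMA_dma : ExtendsDMA (CloneOf DMAGen) :=
  ⟨isClone_cloneOf _, le_rfl⟩

theorem extendsDMA_cloneOf_funion (S : ∀ k : ℕ, Set (DMFun k)) :
    ExtendsDMA (CloneOf (DMAGen ⊹ S)) :=
  ⟨isClone_cloneOf _, (isClone_cloneOf _).cloneOf_le_iff.2 fun _ _ hg => .base (.inl hg)⟩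

namespace ExtendsDMA

theorem cloneOf_funion_le_iff (hC : ExtendsDMA C) : CloneOf (DMAGen ⊹ S) ≤ C ↔ S ≤ C := by
  rw [hC.cloneOf_le_iff, funion_le_iff, and_iff_right (hC.cloneOf_le_iff.1 hC.dma_le)]

theorem cloneOf_funion_op2_le_iff {m : DM4 → DM4 → DM4} (hC : ExtendsDMA C) :
    CloneOf (DMAGen ⊹ op2 m) ≤ C ↔ toF2 m ∈ C 1 :=
  hC.cloneOf_funion_le_iff.trans op2_le_iff

theorem cloneOf_funion_op3_le_iff {m : DM4 → DM4 → DM4 → DM4} (hC : ExtendsDMA C) :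
    CloneOf (DMAGen ⊹ op3 m) ≤ C ↔ toF3 m ∈ C 2 :=
  hC.cloneOf_funion_le_iff.trans op3_le_iff

variable {k : ℕ} {g h : DMFun k}

theorem inf_mem (hC : ExtendsDMA C) (hg : g ∈ C k) (hh : h ∈ C k) : g ⊓ h ∈ C k :=
  hC.comp k 1 (toF2 meet) ![g, h] (DMAGen_le_iff.1 (hC.cloneOf_le_iff.1 hC.dma_le)).1.1
    (Fin.forall_fin_two.2 ⟨hg, hh⟩)

theorem sup_mem (hC : ExtendsDMA C) (hg : g ∈ C k) (hh : h ∈ C k) : g ⊔ h ∈ C k :=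
  hC.comp k 1 (toF2 join) ![g, h] (DMAGen_le_iff.1 (hC.cloneOf_le_iff.1 hC.dma_le)).1.2.1
    (Fin.forall_fin_two.2 ⟨hg, hh⟩)

theorem neg_mem (hC : ExtendsDMA C) (hg : g ∈ C k) : neg ∘ g ∈ C k :=
  hC.comp k 0 (toF1 neg) (fun _ => g) (DMAGen_le_iff.1 (hC.cloneOf_le_iff.1 hC.dma_le)).2
    fun _ => hg

theorem top_mem (hC : ExtendsDMA C) : ⊤ ∈ C k :=
  hC.comp k 0 (toF1 fun _ => t) (fun _ x => x 0)
    (DMAGen_le_iff.1 (hC.cloneOf_le_iff.1 hC.dma_le)).1.2.2.1 fun _ => hC.proj k 0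

theorem bot_mem (hC : ExtendsDMA C) : ⊥ ∈ C k :=
  hC.neg_mem hC.top_mem

end ExtendsDMA

end Clones

section Polymorphisms

/-- The De Morgan functions preserving a binary relation `R` on `DM4`. Persistence and harmony are
the cases where `R` is the information order and the graph of conflation. -/
def Pol (R : DM4 → DM4 → Prop) : ∀ k : ℕ, Set (DMFun k) :=
  fun _ => {g | ∀ x y, (∀ i, R (x i) (y i)) → R (g x) (g y)}

variable {R : DM4 → DM4 → Prop} {k : ℕ} {g h : DMFun k}

theorem isClone_pol (R : DM4 → DM4 → Prop) : IsClone (Pol R) where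
  proj _ i _ _ hxy := hxy i
  comp _ _ _ _ hg hh x y hxy := hg _ _ fun i => hh i x y hxy

theorem mem_pol_conf_iff_harmonious : g ∈ Pol (conf · = ·) k ↔ Harmonious g :=
  ⟨fun hg x => (hg x _ fun _ => rfl).symm,
    fun hg x _ hxy => (hg x).symm.trans (congrArg g (funext hxy))⟩

theorem toF1_mem_pol {m : DM4 → DM4} (hm : ∀ x y, R x y → R (m x) (m y)) :
    toF1 m ∈ Pol R 0 :=
  fun _ _ hxy => hm _ _ (hxy 0)

theorem toF2_mem_pol {m : DM4 → DM4 → DM4}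
    (hm : ∀ x y, R x y → ∀ x' y', R x' y' → R (m x x') (m y y')) : toF2 m ∈ Pol R 1 :=
  fun _ _ hxy => hm _ _ (hxy 0) _ _ (hxy 1)

theorem cloneOf_DMAGen_le_pol_conf : CloneOf DMAGen ≤ Pol (conf · = ·) :=
  (isClone_pol _).cloneOf_le_iff.2 <| DMAGen_le_iff.2
    ⟨⟨toF2_mem_pol (by decide), toF2_mem_pol (by decide), toF1_mem_pol (by decide),
      toF1_mem_pol (by decide)⟩, toF1_mem_pol (by decide)⟩

theorem cloneOf_DMAGen_le_pol_ile : CloneOf DMAGen ≤ Pol ile :=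
  (isClone_pol _).cloneOf_le_iff.2 <| DMAGen_le_iff.2
    ⟨⟨toF2_mem_pol (by decide), toF2_mem_pol (by decide), toF1_mem_pol (by decide),
      toF1_mem_pol (by decide)⟩, toF1_mem_pol (by decide)⟩

theorem harmonious_of_mem_cloneOf_DMAGen (hg : g ∈ CloneOf DMAGen k) : Harmonious g :=
  mem_pol_conf_iff_harmonious.1 (cloneOf_DMAGen_le_pol_conf k hg)

theorem persistent_of_mem_cloneOf_DMAGen (hg : g ∈ CloneOf DMAGen k) : Persistent g :=
  cloneOf_DMAGen_le_pol_ile k hg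

theorem Harmonious.mem_pol_ile_conf (hg : Harmonious g) (hp : Persistent g) :
    g ∈ Pol (fun x y => ile x (conf y)) k :=
  fun x y hxy => by simpa only [← hg y] using hp x _ hxy

theorem Harmonious.mem_pol_conf_ile (hg : Harmonious g) (hp : Persistent g) :
    g ∈ Pol (fun x y => ile (conf x) y) k :=
  fun x y hxy => by simpa only [← hg x] using hp _ y hxy

theorem extendsDMA_pol_conf : ExtendsDMA (Pol (conf · = ·)) :=
  ⟨isClone_pol _, cloneOf_DMAGen_le_pol_conf⟩

theorem extendsDMA_pol_ile_conf : ExtendsDMA (Pol fun x y => ile x (conf y)) :=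
  ⟨isClone_pol _, fun _ _ hg => (harmonious_of_mem_cloneOf_DMAGen hg).mem_pol_ile_conf
    (persistent_of_mem_cloneOf_DMAGen hg)⟩

theorem extendsDMA_pol_conf_ile : ExtendsDMA (Pol fun x y => ile (conf x) y) :=
  ⟨isClone_pol _, fun _ _ hg => (harmonious_of_mem_cloneOf_DMAGen hg).mem_pol_conf_ile
    (persistent_of_mem_cloneOf_DMAGen hg)⟩

theorem Harmonious.eq_of_b_le_iff (hg : Harmonious g) (hh : Harmonious h)
    (hgh : ∀ x, b ≤ g x ↔ b ≤ h x) : g = h := by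
  funext x
  refine eq_iff_b_le.2 ⟨hgh x, ?_⟩
  rw [← hg x, ← hh x]
  exact hgh _

theorem harmonious_mhnp3 : Harmonious (toF3 mhnp3) := fun x =>
  have key : ∀ x y z, mhnp3 (conf x) (conf y) (conf z) = conf (mhnp3 x y z) := by decide
  key (x 0) (x 1) (x 2)

end Polymorphisms

section NormalForm

variable {C : ∀ k : ℕ, Set (DMFun k)} {k : ℕ} {g : DMFun k}

/-- The De Morgan literal expressing `ile a x`, in the sense that it is above `b` exactly when
`ile a x` holds. -/
def literal : DM4 → DM4 → DM4
  | t, x => x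
  | f, x => neg x
  | n, _ => ⊤
  | b, x => x ⊓ neg x

theorem b_le_literal_iff {a x : DM4} : b ≤ literal a x ↔ ile a x := by
  revert a x
  decide

/-- The disjunctive normal form of a De Morgan function: the join, over the tuples `a` it maps above
`b`, of the minterms expressing that `a` is below `x` in the information order. -/
def normalForm (g : DMFun k) : DMFun k :=
  ({a | b ≤ g a} : Finset _).sup fun a => Finset.univ.inf fun i x => literal (a i) (x i)

theorem b_le_normalForm_iff {x : Fin (k + 1) → DM4} :
    b ≤ normalForm g x ↔ ∃ a, b ≤ g a ∧ ∀ i, ile (a i) (x i) := by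
  simp [normalForm, Finset.sup_apply, Finset.inf_apply, supPrime_b.le_finset_sup,
    b_le_literal_iff]

theorem Persistent.b_le_normalForm_iff (hg : Persistent g) {x : Fin (k + 1) → DM4} :
    b ≤ normalForm g x ↔ b ≤ g x := by
  refine DM4.b_le_normalForm_iff.trans ⟨?_, fun hx => ⟨x, hx, fun _ => .inl rfl⟩⟩
  rintro ⟨a, ha, hax⟩
  exact (ile_iff.1 (hg a x hax)).1 ha

theorem ExtendsDMA.literal_mem (hC : ExtendsDMA C) (a : DM4) (i : Fin (k + 1)) :
    (fun x => literal a (x i)) ∈ C k :=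
  have hi := hC.proj k i
  match a with
  | t => hi
  | f => hC.neg_mem hi
  | n => hC.top_mem
  | b => hC.inf_mem hi (hC.neg_mem hi)

theorem ExtendsDMA.normalForm_mem (hC : ExtendsDMA C) (g : DMFun k) : normalForm g ∈ C k :=
  Finset.sup_mem _ hC.bot_mem (fun _ hx _ hy => hC.sup_mem hx hy) _ _ fun a _ =>
    Finset.inf_mem _ hC.top_mem (fun _ hx _ hy => hC.inf_mem hx hy) _ _ fun i _ =>
      hC.literal_mem (a i) i

theorem mem_cloneOf_DMAGen_iff : g ∈ CloneOf DMAGen k ↔ Harmonious g ∧ Persistent g := by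
  refine ⟨fun hg => ⟨harmonious_of_mem_cloneOf_DMAGen hg, persistent_of_mem_cloneOf_DMAGen hg⟩,
    fun ⟨hh, hp⟩ => ?_⟩
  have hmem := extendsDMA_dma.normalForm_mem g
  have heq : normalForm g = g := (harmonious_of_mem_cloneOf_DMAGen hmem).eq_of_b_le_iff hh
    fun x => hp.b_le_normalForm_iff
  rwa [heq] at hmem

end NormalForm

namespace ExtendsDMA

variable {C : ∀ k : ℕ, Set (DMFun k)} {k : ℕ} {g : DMFun k}

theorem exists_mem_conf_pair (hC : ExtendsDMA C) (a : DM4) :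
    ∃ T ∈ C 1, T ![n, b] = a ∧ T ![b, n] = conf a :=
  match a with
  | t => ⟨_, hC.top_mem, rfl, rfl⟩
  | f => ⟨_, hC.bot_mem, rfl, rfl⟩
  | n => ⟨_, hC.proj 1 0, rfl, rfl⟩
  | b => ⟨_, hC.proj 1 1, rfl, rfl⟩

theorem exists_mem_ile_pair (hC : ExtendsDMA C) {a c : DM4} (hac : ile a c) :
    ∃ T ∈ C 2, T ![t, b, n] = a ∧ T ![b, b, n] = c :=
  have h0 := hC.proj 2 0
  have h1 := hC.proj 2 1
  have h2 := hC.proj 2 2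
  have hnf := hC.inf_mem h0 h2
  match a, c, hac with
  | t, t, _ => ⟨_, hC.top_mem, rfl, rfl⟩
  | f, f, _ => ⟨_, hC.bot_mem, rfl, rfl⟩
  | n, n, _ => ⟨_, h2, rfl, rfl⟩
  | b, b, _ => ⟨_, h1, rfl, rfl⟩
  | t, b, _ => ⟨_, h0, rfl, rfl⟩
  | f, b, _ => ⟨_, hC.neg_mem h0, rfl, rfl⟩
  | n, f, _ => ⟨_, hnf, rfl, rfl⟩
  | n, t, _ => ⟨_, hC.neg_mem hnf, rfl, rfl⟩
  | n, b, _ => ⟨_, hC.sup_mem hnf (hC.neg_mem h0), rfl, rfl⟩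

theorem exists_binary_of_not_harmonious (hC : ExtendsDMA C) (hg : g ∈ C k)
    (hgh : ¬ Harmonious g) : ∃ h ∈ C 1, ¬ (b ≤ h ![n, b] ↔ n ≤ h ![b, n]) := by
  obtain ⟨a, ha⟩ := not_forall.1 hgh
  choose T hT hnb hbn using fun i => hC.exists_mem_conf_pair (a i)
  have hmem := hC.comp 1 k g T hg hT
  rw [← funext hbn, ← congrArg g (funext hnb), eq_comm, conf_eq_iff, not_and_or] at ha
  exact ha.elim (fun h => ⟨_, hmem, h⟩) fun h => ⟨_, hC.neg_mem hmem, h⟩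

theorem exists_ternary_of_not_persistent (hC : ExtendsDMA C) (hg : g ∈ C k)
    (hgp : ¬ Persistent g) : ∃ h ∈ C 2, b ≤ h ![t, b, n] ∧ ¬ b ≤ h ![b, b, n] := by
  unfold Persistent at hgp
  push Not at hgp
  obtain ⟨a, c, hac, hgac⟩ := hgp
  choose T hT htbn hbbn using fun i => hC.exists_mem_ile_pair (hac i)
  have hmem := hC.comp 2 k g T hg hT
  rw [← funext htbn, ← funext hbbn, ile_iff, not_and_or, Classical.not_imp,
    Classical.not_imp] at hgac
  exact hgac.elim (fun h => ⟨_, hmem, h⟩) fun h => ⟨_, hC.neg_mem hmem, h⟩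

theorem toF2_mem_of_forall_eq {m : DM4 → DM4 → DM4} {h : DMFun 1} (hC : ExtendsDMA C)
    (hh : h ∈ C 1) (hm : ∀ x y, m x y = (y ⊓ neg y) ⊓ (h ![x, y] ⊔ (x ⊔ neg x))) :
    toF2 m ∈ C 1 := by
  have h0 := hC.proj 1 0
  have h1 := hC.proj 1 1
  convert hC.inf_mem (hC.inf_mem h1 (hC.neg_mem h1))
    (hC.sup_mem hh (hC.sup_mem h0 (hC.neg_mem h0))) using 1
  funext x
  rw [← FinVec.etaExpand_eq x]
  exact hm _ _

theorem mnh1_mem_of_binary {h : DMFun 1} (hC : ExtendsDMA C) (hh : h ∈ C 1)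
    (hnb : ¬ b ≤ h ![n, b]) (hbn : n ≤ h ![b, n]) : toF2 mnh1 ∈ C 1 := by
  refine hC.toF2_mem_of_forall_eq hh fun x y => ?_
  have key : ∀ x y v, (x = n → y = b → ¬ b ≤ v) → (x = b → y = n → n ≤ v) →
      mnh1 x y = (y ⊓ neg y) ⊓ (v ⊔ (x ⊔ neg x)) := by decide
  exact key x y _ (by rintro rfl rfl; exact hnb) (by rintro rfl rfl; exact hbn)

theorem mnh2_mem_of_binary {h : DMFun 1} (hC : ExtendsDMA C) (hh : h ∈ C 1)
    (hnb : b ≤ h ![n, b]) (hbn : ¬ n ≤ h ![b, n]) : toF2 mnh2 ∈ C 1 := by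
  refine hC.toF2_mem_of_forall_eq hh fun x y => ?_
  have key : ∀ x y v, (x = n → y = b → b ≤ v) → (x = b → y = n → ¬ n ≤ v) →
      mnh2 x y = (y ⊓ neg y) ⊓ (v ⊔ (x ⊔ neg x)) := by decide
  exact key x y _ (by rintro rfl rfl; exact hnb) (by rintro rfl rfl; exact hbn)

theorem mnh1_mem_or_mnh2_mem_of_not_harmonious (hC : ExtendsDMA C) (hg : g ∈ C k)
    (hgh : ¬ Harmonious g) : toF2 mnh1 ∈ C 1 ∨ toF2 mnh2 ∈ C 1 := by
  obtain ⟨h, hh, hne⟩ := hC.exists_binary_of_not_harmonious hg hgh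
  by_cases hnb : b ≤ h ![n, b]
  · exact .inr (hC.mnh2_mem_of_binary hh hnb fun hbn => hne (iff_of_true hnb hbn))
  · exact .inl (hC.mnh1_mem_of_binary hh hnb
      (not_not.1 fun hbn => hne (iff_of_false hnb hbn)))

theorem mhnp3_mem_of_ternary {h : DMFun 2} (hC : ExtendsDMA C)
    (hharm : ∀ g ∈ C 2, Harmonious g) (hh : h ∈ C 2) (htbn : b ≤ h ![t, b, n])
    (hbbn : ¬ b ≤ h ![b, b, n]) : toF3 mhnp3 ∈ C 2 := by
  have h0 := hC.proj 2 0
  have h1 := hC.proj 2 1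
  have h2 := hC.proj 2 2
  have hterm := hC.inf_mem (hC.inf_mem h1 (hC.neg_mem h1))
    (hC.inf_mem h0 (hC.sup_mem hh (hC.sup_mem h2 (hC.neg_mem h2))))
  have key : ∀ x y z v, (x = t → y = b → z = n → b ≤ v) → (x = b → y = b → z = n → ¬ b ≤ v) →
      (b ≤ mhnp3 x y z ↔ b ≤ (y ⊓ neg y) ⊓ (x ⊓ (v ⊔ (z ⊔ neg z)))) := by decide
  convert hterm using 1
  refine harmonious_mhnp3.eq_of_b_le_iff (hharm _ hterm) fun x => ?_
  rw [← FinVec.etaExpand_eq x]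
  refine key (x 0) (x 1) (x 2) (h ![x 0, x 1, x 2]) ?_ ?_ <;> intro hx hy hz <;> rwa [hx, hy, hz]

theorem mhnp3_mem_of_not_persistent (hC : ExtendsDMA C) (hharm : ∀ g ∈ C 2, Harmonious g)
    (hg : g ∈ C k) (hgp : ¬ Persistent g) : toF3 mhnp3 ∈ C 2 :=
  have ⟨_, hh, htbn, hbbn⟩ := hC.exists_ternary_of_not_persistent hg hgp
  hC.mhnp3_mem_of_ternary hharm hh htbn hbbn

theorem mnh1_mem_or_mnh2_mem_or_mhnp3_mem (hC : ExtendsDMA C) (hne : C ≠ CloneOf DMAGen) :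
    toF2 mnh1 ∈ C 1 ∨ toF2 mnh2 ∈ C 1 ∨ toF3 mhnp3 ∈ C 2 := by
  by_cases hharm : ∀ k, ∀ g ∈ C k, Harmonious g
  · obtain ⟨k, g, hg, hgD⟩ : ∃ k, ∃ g ∈ C k, g ∉ CloneOf DMAGen k := by
      by_contra! hle
      exact hne (le_antisymm hle hC.dma_le)
    have hgp : ¬ Persistent g := fun hp => hgD (mem_cloneOf_DMAGen_iff.2 ⟨hharm k g hg, hp⟩)
    exact .inr (.inr (hC.mhnp3_mem_of_not_persistent (hharm 2) hg hgp))
  · push Not at hharm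
    obtain ⟨k, g, hg, hgh⟩ := hharm
    exact (hC.mnh1_mem_or_mnh2_mem_of_not_harmonious hg hgh).imp_right .inl

end ExtendsDMA

section Incomparability

theorem cloneOf_mnh1_le_pol_ile_conf :
    CloneOf (DMAGen ⊹ op2 mnh1) ≤ Pol fun x y => ile x (conf y) :=
  extendsDMA_pol_ile_conf.cloneOf_funion_op2_le_iff.2 (toF2_mem_pol (by decide))

theorem cloneOf_mnh2_le_pol_conf_ile :
    CloneOf (DMAGen ⊹ op2 mnh2) ≤ Pol fun x y => ile (conf x) y :=
  extendsDMA_pol_conf_ile.cloneOf_funion_op2_le_iff.2 (toF2_mem_pol (by decide))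

theorem cloneOf_mhnp3_le_pol_conf : CloneOf (DMAGen ⊹ op3 mhnp3) ≤ Pol (conf · = ·) :=
  extendsDMA_pol_conf.cloneOf_funion_op3_le_iff.2
    (mem_pol_conf_iff_harmonious.2 harmonious_mhnp3)

theorem not_cloneOf_mnh1_le_cloneOf_mnh2 :
    ¬ CloneOf (DMAGen ⊹ op2 mnh1) ≤ CloneOf (DMAGen ⊹ op2 mnh2) := fun hle =>
  have hmem := extendsDMA_pol_conf_ile.cloneOf_funion_op2_le_iff.1
    (hle.trans cloneOf_mnh2_le_pol_conf_ile)
  absurd (hmem ![n, b] ![b, n] (by decide)) (by decide)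

theorem not_cloneOf_mnh2_le_cloneOf_mnh1 :
    ¬ CloneOf (DMAGen ⊹ op2 mnh2) ≤ CloneOf (DMAGen ⊹ op2 mnh1) := fun hle =>
  have hmem := extendsDMA_pol_ile_conf.cloneOf_funion_op2_le_iff.1
    (hle.trans cloneOf_mnh1_le_pol_ile_conf)
  absurd (hmem ![n, b] ![b, n] (by decide)) (by decide)

theorem not_cloneOf_mnh1_le_cloneOf_mhnp3 :
    ¬ CloneOf (DMAGen ⊹ op2 mnh1) ≤ CloneOf (DMAGen ⊹ op3 mhnp3) := fun hle =>
  have hmem := extendsDMA_pol_conf.cloneOf_funion_op2_le_iff.1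
    (hle.trans cloneOf_mhnp3_le_pol_conf)
  absurd (hmem ![n, b] ![b, n] (by decide)) (by decide)

theorem not_cloneOf_mhnp3_le_cloneOf_mnh1 :
    ¬ CloneOf (DMAGen ⊹ op3 mhnp3) ≤ CloneOf (DMAGen ⊹ op2 mnh1) := fun hle =>
  have hmem := extendsDMA_pol_ile_conf.cloneOf_funion_op3_le_iff.1
    (hle.trans cloneOf_mnh1_le_pol_ile_conf)
  absurd (hmem ![t, b, n] ![n, n, b] (by decide)) (by decide)

theorem not_cloneOf_mnh2_le_cloneOf_mhnp3 :
    ¬ CloneOf (DMAGen ⊹ op2 mnh2) ≤ CloneOf (DMAGen ⊹ op3 mhnp3) := fun hle =>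
  have hmem := extendsDMA_pol_conf.cloneOf_funion_op2_le_iff.1
    (hle.trans cloneOf_mhnp3_le_pol_conf)
  absurd (hmem ![n, b] ![b, n] (by decide)) (by decide)

theorem not_cloneOf_mhnp3_le_cloneOf_mnh2 :
    ¬ CloneOf (DMAGen ⊹ op3 mhnp3) ≤ CloneOf (DMAGen ⊹ op2 mnh2) := fun hle =>
  have hmem := extendsDMA_pol_conf_ile.cloneOf_funion_op3_le_iff.1
    (hle.trans cloneOf_mnh2_le_pol_conf_ile)
  absurd (hmem ![b, b, n] ![t, n, b] (by decide)) (by decide)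

end Incomparability

section Covers

theorem covBy_iff_mem_of_isAntichain {α : Type*} [PartialOrder α] {a c : α} {s : Set α}
    (hs : IsAntichain (· ≤ ·) s) (hlt : ∀ d ∈ s, a < d) (hmin : ∀ c, a < c → ∃ d ∈ s, d ≤ c) :
    a ⋖ c ↔ c ∈ s := by
  refine ⟨fun hac => ?_, fun hc => ⟨hlt c hc, fun e hae hec => ?_⟩⟩
  · obtain ⟨d, hd, hdc⟩ := hmin c hac.lt
    exact eq_of_le_of_not_lt hdc (hac.2 (hlt d hd)) ▸ hd
  · obtain ⟨d, hd, hde⟩ := hmin e hae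
    exact hs.not_lt hd hc (hde.trans_lt hec)

/-- The lattice of clones on `DM4`. -/
abbrev Clone : Type := {C : ∀ k : ℕ, Set (DMFun k) // IsClone C}

/-- The clone generated by a family of operations, as an element of the lattice of clones. -/
def Clone.generate (S : ∀ k : ℕ, Set (DMFun k)) : Clone := ⟨CloneOf S, isClone_cloneOf S⟩

theorem exists_covBy_iff {C : ∀ k : ℕ, Set (DMFun k)} (S : ∀ k : ℕ, Set (DMFun k)) :
    (∃ hC : IsClone C, Clone.generate S ⋖ ⟨C, hC⟩) ↔
      IsClone C ∧ CloneOf S ≤ C ∧ C ≠ CloneOf S ∧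
        ∀ E, IsClone E → CloneOf S ≤ E → E ≤ C → E = CloneOf S ∨ E = C := by
  simp only [covBy_iff_lt_and_eq_or_eq, lt_iff_le_and_ne, Clone.generate, Subtype.forall,
    Subtype.mk_le_mk, ne_eq, Subtype.mk.injEq, exists_prop, and_assoc, eq_comm (a := CloneOf S)]

theorem dma_lt_generate {S T : ∀ k : ℕ, Set (DMFun k)}
    (hST : ¬ CloneOf (DMAGen ⊹ S) ≤ CloneOf (DMAGen ⊹ T)) :
    Clone.generate DMAGen < Clone.generate (DMAGen ⊹ S) :=
  lt_of_le_not_ge (extendsDMA_cloneOf_funion S).dma_le fun hle : CloneOf (DMAGen ⊹ S) ≤ _ =>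
    hST (hle.trans (extendsDMA_cloneOf_funion T).dma_le)

/-- The minimal clones strictly above `DMA`. -/
def minimalExtensions : Set Clone :=
  {.generate (DMAGen ⊹ op2 mnh1), .generate (DMAGen ⊹ op2 mnh2), .generate (DMAGen ⊹ op3 mhnp3)}

theorem isAntichain_minimalExtensions : IsAntichain (· ≤ ·) minimalExtensions := by
  rintro _ (rfl | rfl | rfl) _ (rfl | rfl | rfl) hne
  exacts [absurd rfl hne, not_cloneOf_mnh1_le_cloneOf_mnh2, not_cloneOf_mnh1_le_cloneOf_mhnp3,
    not_cloneOf_mnh2_le_cloneOf_mnh1, absurd rfl hne, not_cloneOf_mnh2_le_cloneOf_mhnp3,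
    not_cloneOf_mhnp3_le_cloneOf_mnh1, not_cloneOf_mhnp3_le_cloneOf_mnh2, absurd rfl hne]

theorem dma_covBy_iff_mem_minimalExtensions {C : Clone} :
    Clone.generate DMAGen ⋖ C ↔ C ∈ minimalExtensions := by
  refine covBy_iff_mem_of_isAntichain isAntichain_minimalExtensions ?_ fun D hD => ?_
  · rintro _ (rfl | rfl | rfl)
    exacts [dma_lt_generate not_cloneOf_mnh1_le_cloneOf_mnh2,
      dma_lt_generate not_cloneOf_mnh2_le_cloneOf_mnh1,
      dma_lt_generate not_cloneOf_mhnp3_le_cloneOf_mnh1]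
  · have hext : ExtendsDMA D.1 := ⟨D.2, hD.le⟩
    rcases hext.mnh1_mem_or_mnh2_mem_or_mhnp3_mem fun h => hD.ne' (Subtype.ext h) with h | h | h
    · exact ⟨_, .inl rfl, hext.cloneOf_funion_op2_le_iff.2 h⟩
    · exact ⟨_, .inr (.inl rfl), hext.cloneOf_funion_op2_le_iff.2 h⟩
    · exact ⟨_, .inr (.inr rfl), hext.cloneOf_funion_op3_le_iff.2 h⟩

end Covers

/-- Every clone strictly above DMA contains mnh²₁, mnh²₂ or mhnp³;
the three clones ⟨DMA, mnh²₁⟩, ⟨DMA, mnh²₂⟩, ⟨DMA, mhnp³⟩ are pairwise incomparable;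
consequently these are exactly the covers of DMA in the lattice of clones on DM4. -/
theorem covers_of_dma :
    (∀ C : ∀ k : ℕ, Set (DMFun k), IsClone C → CloneLE (CloneOf DMAGen) C →
      C ≠ CloneOf DMAGen →
      (toF2 mnh1 ∈ C 1 ∨ toF2 mnh2 ∈ C 1 ∨ toF3 mhnp3 ∈ C 2)) ∧
    (¬ CloneLE (CloneOf (DMAGen ⊹ op2 mnh1)) (CloneOf (DMAGen ⊹ op2 mnh2)) ∧
     ¬ CloneLE (CloneOf (DMAGen ⊹ op2 mnh2)) (CloneOf (DMAGen ⊹ op2 mnh1)) ∧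
     ¬ CloneLE (CloneOf (DMAGen ⊹ op2 mnh1)) (CloneOf (DMAGen ⊹ op3 mhnp3)) ∧
     ¬ CloneLE (CloneOf (DMAGen ⊹ op3 mhnp3)) (CloneOf (DMAGen ⊹ op2 mnh1)) ∧
     ¬ CloneLE (CloneOf (DMAGen ⊹ op2 mnh2)) (CloneOf (DMAGen ⊹ op3 mhnp3)) ∧
     ¬ CloneLE (CloneOf (DMAGen ⊹ op3 mhnp3)) (CloneOf (DMAGen ⊹ op2 mnh2))) ∧
    (∀ C : ∀ k : ℕ, Set (DMFun k),
      (IsClone C ∧ CloneLE (CloneOf DMAGen) C ∧ C ≠ CloneOf DMAGen ∧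
        (∀ E : ∀ k : ℕ, Set (DMFun k), IsClone E → CloneLE (CloneOf DMAGen) E →
          CloneLE E C → (E = CloneOf DMAGen ∨ E = C))) ↔
      (C = CloneOf (DMAGen ⊹ op2 mnh1) ∨ C = CloneOf (DMAGen ⊹ op2 mnh2) ∨
        C = CloneOf (DMAGen ⊹ op3 mhnp3))) := by
  refine ⟨fun C hC hle hne => ExtendsDMA.mnh1_mem_or_mnh2_mem_or_mhnp3_mem ⟨hC, hle⟩ hne,
    ⟨not_cloneOf_mnh1_le_cloneOf_mnh2, not_cloneOf_mnh2_le_cloneOf_mnh1,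
      not_cloneOf_mnh1_le_cloneOf_mhnp3, not_cloneOf_mhnp3_le_cloneOf_mnh1,
      not_cloneOf_mnh2_le_cloneOf_mhnp3, not_cloneOf_mhnp3_le_cloneOf_mnh2⟩, fun C => ?_⟩
  refine (exists_covBy_iff DMAGen).symm.trans ?_
  simp only [dma_covBy_iff_mem_minimalExtensions, minimalExtensions, Set.mem_insert_iff,
    Set.mem_singleton_iff]
  simp only [Clone.generate, Subtype.mk.injEq, exists_prop, and_iff_right_iff_imp]
  rintro (rfl | rfl | rfl) <;> exact isClone_cloneOf _

end DM4
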